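/- The K-algebra homomorphism φ : R_{n+1} → R_n with φ(x_i) = x_i for 1 ≤ i ≤ n and φ(x_{n+1}) = x_1 induces a K-algebra isomorphism R_{n+1}/(P_n + ⟨x_{n+1} − x_1⟩) ≅ R_n/I_{C_n}. -/

import Mathlib

noncomputable section

open MvPolynomial

/-- Row of the Laplacian matrix of the `n`-cycle on `Fin n`
(vertex `j` of the paper corresponds to index `j-1`). -/
def cycLap (n : ℕ) [NeZero n] (j : Fin n) : Fin n → ℤ :=
  fun l => if l = j then 2 else if l = j + 1 ∨ j = l + 1 then -1 else 0

/-- The cycle graph `C_n` on `Fin n`. -/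
def cycleG (n : ℕ) [NeZero n] : SimpleGraph (Fin n) :=
  SimpleGraph.fromRel (fun i j => j = i + 1)

/-- The lattice ideal of a lattice `L ⊆ ℤ^n` in `K[x_1,…,x_n]`. -/
def latticeIdeal (n : ℕ) (K : Type*) [Field K] (L : Submodule ℤ (Fin n → ℤ)) :
    Ideal (MvPolynomial (Fin n) K) :=
  Ideal.span { f | ∃ u v : Fin n → ℕ,
    ((fun i => (u i : ℤ)) - fun i => (v i : ℤ)) ∈ L ∧
    f = (∏ i, X i ^ u i) - ∏ i, X i ^ v i }

open Classical in
/-- The exponent vector of the monomial `x^{S → S̄}`: the `i`-th entry is the number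
of edges of the cycle joining `i ∈ S` to the complement of `S`. -/
def outVec (n : ℕ) [NeZero n] (S : Set (Fin n)) (i : Fin n) : ℕ :=
  if i ∈ S then (if i + 1 ∈ S then 0 else 1) + (if i - 1 ∈ S then 0 else 1) else 0

/-- The monomial `x^{S → S̄}`. -/
def outMono (n : ℕ) (K : Type*) [NeZero n] [Field K] (S : Set (Fin n)) :
    MvPolynomial (Fin n) K :=
  ∏ i, X i ^ outVec n S i

open Classical in
/-- `b_V = ∑_{j ∈ V} b_j`, sum of Laplacian rows over a set of vertices. -/
def bPart (n : ℕ) [NeZero n] (S : Set (Fin n)) : Fin n → ℤ :=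
  ∑ j : Fin n, if j ∈ S then cycLap n j else 0

/-- The toppling ideal of the parcycle `(C_n, {V_1,…,V_k})`: the lattice ideal of the
lattice generated by the vectors `b_{V_j}`. -/
def topplingPar (n k : ℕ) (K : Type*) [NeZero n] [Field K] (V : Fin k → Set (Fin n)) :
    Ideal (MvPolynomial (Fin n) K) :=
  latticeIdeal n K (Submodule.span ℤ (Set.range fun j => bPart n (V j)))

/-- `S` is a connected-parset of the parcycle `(C_n, V)`: a union of parts inducing a
connected subgraph of the cycle. -/
def isConnParset (n k : ℕ) [NeZero n] (V : Fin k → Set (Fin n)) (S : Set (Fin n)) : Prop :=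
  (∃ T : Set (Fin k), S = ⋃ j ∈ T, V j) ∧ ((cycleG n).induce S).Connected

/-- The `G`-parking function ideal of a parcycle with sink part `V sink`. -/
def gparkIdeal (n k : ℕ) (K : Type*) [NeZero n] [Field K] (V : Fin k → Set (Fin n))
    (sink : Fin k) : Ideal (MvPolynomial (Fin n) K) :=
  Ideal.span { f | ∃ S : Set (Fin n), isConnParset n k V S ∧ ¬ V sink ⊆ S ∧
    f = outMono n K S }

/-- The index in `Fin (n+1)` of the paper's variable `x_m`, `1 ≤ m ≤ n+1`. -/
def xIdx (n : ℕ) (m : ℕ) : Fin (n + 1) := ⟨(m - 1) % (n + 1), Nat.mod_lt _ (Nat.succ_pos n)⟩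

/-- The defining ideal `P_n ⊆ K[x_1,…,x_{n+1}]` of the rational normal curve of degree `n`. -/
def Pideal (n : ℕ) (K : Type*) [Field K] : Ideal (MvPolynomial (Fin (n + 1)) K) :=
  Ideal.span { f | ∃ i j : ℕ, 2 ≤ i ∧ i ≤ j ∧ j ≤ n ∧
    f = X (xIdx n i) * X (xIdx n j) - X (xIdx n (i - 1)) * X (xIdx n (j + 1)) }

open Classical in
/-- The `λ`-weight of an exponent vector. -/
def wdeg (n : ℕ) (lam : Fin n → ℕ) (u : Fin n →₀ ℕ) : ℕ := ∑ i, lam i * u i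

open Classical in
/-- The `λ`-initial form of a polynomial: the sum of its terms of maximal `λ`-weight. -/
def initForm (n : ℕ) (K : Type*) [Field K] (lam : Fin n → ℕ) (f : MvPolynomial (Fin n) K) :
    MvPolynomial (Fin n) K :=
  ∑ u ∈ f.support.filter (fun u => wdeg n lam u = f.support.sup (wdeg n lam)),
    monomial u (coeff u f)

/-- The `λ`-initial ideal of an ideal. -/
def initIdeal (n : ℕ) (K : Type*) [Field K] (lam : Fin n → ℕ)
    (I : Ideal (MvPolynomial (Fin n) K)) : Ideal (MvPolynomial (Fin n) K) :=
  Ideal.span { g | ∃ f ∈ I, f ≠ 0 ∧ g = initForm n K lam f }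

/-- Monomials in elements satisfying `y a * y b = y 0 * y (a + b)` have a normal form. -/
theorem aux_multiset {n : ℕ} [NeZero n] {A : Type*} [CommRing A] (y : Fin n → A)
    (hy : ∀ a b, y a * y b = y 0 * y (a + b)) (s : Multiset (Fin n)) :
    ∀ a, (s.map y).prod * y a = y 0 ^ (Multiset.card s) * y (a + s.sum) := by
  induction s using Multiset.induction_on with
  | empty => intro a; simp
  | cons b s ih =>
    intro a
    have h := ih b
    simp only [Multiset.map_cons, Multiset.prod_cons, Multiset.card_cons, Multiset.sum_cons]
    calc y b * (s.map y).prod * y a = ((s.map y).prod * y b) * y a := by ring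
      _ = y 0 ^ (Multiset.card s) * (y a * y (b + s.sum)) := by rw [h]; ring
      _ = _ := by rw [hy]; ring

theorem aux_multiset_eq {n : ℕ} [NeZero n] {A : Type*} [CommRing A] (y : Fin n → A)
    (hy : ∀ a b, y a * y b = y 0 * y (a + b)) (s t : Multiset (Fin n))
    (hc : Multiset.card s = Multiset.card t) (hs : s.sum = t.sum) :
    (s.map y).prod = (t.map y).prod := by
  induction s using Multiset.induction_on with
  | empty =>
    have : t = 0 := by rw [← Multiset.card_eq_zero, ← hc]; simp
    rw [this]
  | cons a s _ =>
    induction t using Multiset.induction_on with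
    | empty => simp at hc
    | cons b t _ =>
      have h1 := aux_multiset y hy s a
      have h2 := aux_multiset y hy t b
      simp only [Multiset.map_cons, Multiset.prod_cons, Multiset.card_cons,
        Multiset.sum_cons] at *
      rw [mul_comm (y a), h1, mul_comm (y b), h2, hs]
      have : Multiset.card s = Multiset.card t := by omega
      rw [this]

theorem aux_prod {n : ℕ} [NeZero n] {A : Type*} [CommRing A] (y : Fin n → A)
    (hy : ∀ a b, y a * y b = y 0 * y (a + b)) (u v : Fin n → ℕ)
    (hc : ∑ i, u i = ∑ i, v i) (hs : ∑ i, u i • i = ∑ i, v i • i) :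
    ∏ i, y i ^ u i = ∏ i, y i ^ v i := by
  have key : ∀ w : Fin n → ℕ,
      ((∑ i, Multiset.replicate (w i) i).map y).prod = ∏ i, y i ^ w i ∧
      Multiset.card (∑ i, Multiset.replicate (w i) i) = ∑ i, w i ∧
      (∑ i, Multiset.replicate (w i) i).sum = ∑ i, w i • i := by
    intro w
    refine ⟨?_, ?_, ?_⟩
    · have hm : (∑ i, Multiset.replicate (w i) i).map y
          = ∑ i, (Multiset.replicate (w i) i).map y :=
        map_sum (Multiset.mapAddMonoidHom y) _ _
      rw [hm, Multiset.prod_sum]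
      simp
    · simp
    · rw [Multiset.sum_sum]
      simp [Multiset.sum_replicate]
  rw [← (key u).1, ← (key v).1]
  apply aux_multiset_eq y hy
  · rw [(key u).2.1, (key v).2.1, hc]
  · rw [(key u).2.2, (key v).2.2, hs]

theorem cycLap_eq (n : ℕ) [NeZero n] (hn : 3 ≤ n) (j : Fin n) :
    cycLap n j = Pi.single j 2 - Pi.single (j + 1) 1 - Pi.single (j - 1) 1 := by
  have h1 : (1 : Fin n) ≠ 0 := by
    intro h
    have := congrArg Fin.val h
    rw [Fin.val_one' n, Fin.val_zero, Nat.mod_eq_of_lt (by omega)] at this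
    omega
  have h2 : (1 : Fin n) + 1 ≠ 0 := by
    intro h
    have := congrArg Fin.val h
    rw [Fin.val_add, Fin.val_one' n, Fin.val_zero, Nat.mod_eq_of_lt (show 1 < n by omega),
      Nat.mod_eq_of_lt (show 1 + 1 < n by omega)] at this
    omega
  have e1 : j + 1 ≠ j := by simpa using h1
  have e2 : j - 1 ≠ j := by simpa using h1
  have e3 : j + 1 ≠ j - 1 := by
    intro h
    apply h2
    have : j + 1 + 1 = j := by rw [h]; simp
    rw [add_assoc] at this
    simpa using this
  funext l
  simp only [cycLap, Pi.sub_apply, Pi.single_apply]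
  have e4 : j = l + 1 ↔ l = j - 1 := by
    rw [eq_sub_iff_add_eq]; exact eq_comm
  simp only [e4]
  by_cases a : l = j
  · subst a; simp [e1.symm, e2.symm]
  · by_cases b : l = j + 1
    · subst b; simp [e1, e3]
    · by_cases c : l = j - 1 <;> simp [a, b, c, e2, e3.symm]

theorem lap_functional (n : ℕ) [NeZero n] (hn : 3 ≤ n) {M : Type*} [AddCommGroup M]
    (g : Fin n → M) (hg : ∀ j, (2 : ℤ) • g j - g (j + 1) - g (j - 1) = 0)
    (w : Fin n → ℤ) (hw : w ∈ Submodule.span ℤ (Set.range (cycLap n))) :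
    ∑ i, w i • g i = 0 := by
  let F : (Fin n → ℤ) →ₗ[ℤ] M := Fintype.linearCombination ℤ g
  have hF : ∀ w, F w = ∑ i, w i • g i := fun w => Fintype.linearCombination_apply ℤ g w
  rw [← hF]
  have : Submodule.span ℤ (Set.range (cycLap n)) ≤ LinearMap.ker F := by
    rw [Submodule.span_le]
    rintro _ ⟨j, rfl⟩
    rw [SetLike.mem_coe, LinearMap.mem_ker, cycLap_eq n hn, map_sub, map_sub]
    simp only [F, Fintype.linearCombination_apply_single, one_smul]
    exact hg j
  exact LinearMap.mem_ker.mp (this hw)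

/-- The basis vector at the class of `m` modulo `n`. -/
def eVec (n : ℕ) [NeZero n] (m : ℕ) : Fin n → ℤ := Pi.single (Fin.ofNat n m) 1

theorem ofNat_succ' (n : ℕ) [NeZero n] (m : ℕ) :
    Fin.ofNat n (m + 1) = Fin.ofNat n m + 1 := by
  apply Fin.ext
  simp [Fin.val_add, Fin.val_one']

theorem eVec_step (n : ℕ) [NeZero n] (hn : 3 ≤ n) (m : ℕ) :
    (2 : ℤ) • eVec n (m + 1) - eVec n (m + 2) - eVec n m ∈
      Submodule.span ℤ (Set.range (cycLap n)) := by
  have : (2 : ℤ) • eVec n (m + 1) - eVec n (m + 2) - eVec n m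
      = cycLap n (Fin.ofNat n (m + 1)) := by
    rw [cycLap_eq n hn]
    unfold eVec
    rw [ofNat_succ' n (m + 1)]
    have : Fin.ofNat n (m + 1) - 1 = Fin.ofNat n m := by rw [ofNat_succ' n m]; simp
    rw [this, ← Pi.single_smul]
    simp
  rw [this]
  exact Submodule.subset_span ⟨_, rfl⟩

theorem eVec_mem (n : ℕ) [NeZero n] (hn : 3 ≤ n) (i k : ℕ) :
    eVec n (i + 1) + eVec n (i + k + 1) - (eVec n i + eVec n (i + k + 2)) ∈
      Submodule.span ℤ (Set.range (cycLap n)) := by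
  induction k with
  | zero =>
    have := eVec_step n hn i
    convert this using 1
    simp only [add_zero, two_smul]
    abel
  | succ k ih =>
    have h := Submodule.add_mem _ ih (eVec_step n hn (i + k + 1))
    convert h using 1
    have e1 : i + (k + 1) + 1 = i + k + 2 := by ring
    have e2 : i + (k + 1) + 2 = i + k + 3 := by ring
    have e3 : i + k + 1 + 1 = i + k + 2 := by ring
    have e4 : i + k + 1 + 2 = i + k + 3 := by ring
    rw [e1, e2, e3, e4, two_smul]
    abel

/-- Quadratic binomials of the cyclic Hankel matrix lie in the lattice ideal. -/
theorem quad_mem (n : ℕ) [NeZero n] (K : Type*) [Field K]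
    (L : Submodule ℤ (Fin n → ℤ)) (a b c d : ℕ)
    (h : eVec n a + eVec n b - (eVec n c + eVec n d) ∈ L) :
    (X (Fin.ofNat n a) * X (Fin.ofNat n b) - X (Fin.ofNat n c) * X (Fin.ofNat n d) :
      MvPolynomial (Fin n) K) ∈ latticeIdeal n K L := by
  apply Ideal.subset_span
  let s : ℕ → Fin n → ℕ := fun m => Pi.single (Fin.ofNat n m) 1
  have hs : ∀ m i, ((s m i : ℕ) : ℤ) = eVec n m i := by
    intro m i
    simp only [s, eVec, Pi.single_apply]
    split_ifs <;> simp
  have hp : ∀ m, (∏ i, X i ^ s m i : MvPolynomial (Fin n) K) = X (Fin.ofNat n m) := by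
    intro m
    simp only [s, Pi.single_apply]
    rw [Finset.prod_eq_single (Fin.ofNat n m)]
    · simp
    · intro b _ hb; rw [if_neg hb, pow_zero]
    · simp
  refine ⟨fun i => s a i + s b i, fun i => s c i + s d i, ?_, ?_⟩
  · convert h using 1
    funext i
    simp [hs]
  · simp only [pow_add, Finset.prod_mul_distrib, hp]

/-- Abstract form of the Hankel relations with the two ends identified. -/
theorem hankel_shift {A : Type*} [CommRing A] (n : ℕ) (z : ℕ → A)
    (hz : ∀ i j, i ≤ j → j + 2 ≤ n → z (i + 1) * z (j + 1) = z i * z (j + 2)) (k : ℕ) :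
    ∀ a b, a + k ≤ b → b + k ≤ n → z (a + k) * z b = z a * z (b + k) := by
  induction k with
  | zero => intros; simp
  | succ k ih =>
    intro a b h1 h2
    obtain ⟨b', rfl⟩ : ∃ b', b = b' + 1 := ⟨b - 1, by omega⟩
    have := hz (a + k) b' (by omega) (by omega)
    rw [← add_assoc, this, ih a (b' + 2) (by omega) (by omega)]
    congr 2
    ring

theorem hankel_cyc {A : Type*} [CommRing A] (n : ℕ) (z : ℕ → A)
    (hz : ∀ i j, i ≤ j → j + 2 ≤ n → z (i + 1) * z (j + 1) = z i * z (j + 2))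
    (h0 : z n = z 0) (a b : ℕ) (ha : a < n) (hb : b < n) :
    z a * z b = z 0 * z ((a + b) % n) := by
  wlog hab : a ≤ b generalizing a b
  · rw [mul_comm, this b a hb ha (by omega), add_comm]
  by_cases h : a + b ≤ n
  · have := hankel_shift n z hz a 0 b (by omega) (by omega)
    rw [zero_add] at this
    rw [this, add_comm b a]
    rcases h.lt_or_eq with h | h
    · rw [Nat.mod_eq_of_lt h]
    · rw [h, Nat.mod_self, h0]
  · have := hankel_shift n z hz (n - b) (a + b - n) b (by omega) (by omega)
    rw [show a + b - n + (n - b) = a by omega, show b + (n - b) = n by omega, h0] at this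
    rw [this, mul_comm, Nat.mod_eq_sub_mod (by omega), Nat.mod_eq_of_lt (by omega)]

/-- The map `φ : R_{n+1} → R_n`, `φ(x_i) = x_i` (`i ≤ n`), `φ(x_{n+1}) = x_1`,
induces a `K`-algebra isomorphism `R_{n+1}/(P_n + ⟨x_{n+1} - x_1⟩) ≅ R_n/I_{C_n}`. -/
theorem statement_2 (K : Type*) [Field K] (n : ℕ) [NeZero n] (hn : 3 ≤ n) :
    ∃ e : (MvPolynomial (Fin (n + 1)) K ⧸
            (Pideal n K ⊔ Ideal.span {X (Fin.last n) - X (0 : Fin (n + 1))})) ≃ₐ[K]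
          (MvPolynomial (Fin n) K ⧸
            latticeIdeal n K (Submodule.span ℤ (Set.range (cycLap n)))),
      ∀ f : MvPolynomial (Fin (n + 1)) K,
        e (Ideal.Quotient.mk _ f) =
          Ideal.Quotient.mk _
            (MvPolynomial.aeval (R := K)
              (fun l : Fin (n + 1) =>
                if h : (l : ℕ) < n then (X ⟨(l : ℕ), h⟩ : MvPolynomial (Fin n) K)
                else X ⟨0, by omega⟩) f) := by
  classical
  set I := Pideal n K ⊔ Ideal.span {X (Fin.last n) - X (0 : Fin (n + 1))} with hI
  set J := latticeIdeal n K (Submodule.span ℤ (Set.range (cycLap n))) with hJ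
  set φ : MvPolynomial (Fin (n + 1)) K →ₐ[K] MvPolynomial (Fin n) K :=
    MvPolynomial.aeval (R := K) (fun l : Fin (n + 1) =>
                if h : (l : ℕ) < n then (X ⟨(l : ℕ), h⟩ : MvPolynomial (Fin n) K)
                else X ⟨0, by omega⟩) with hφ
  let ψ : MvPolynomial (Fin n) K →ₐ[K] MvPolynomial (Fin (n + 1)) K :=
    MvPolynomial.aeval (R := K) (fun l : Fin n => X l.castSucc)
  have φX : ∀ l : Fin (n + 1), φ (X l) = X (Fin.ofNat n l) := by
    intro l
    rw [hφ, aeval_X]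
    split_ifs with h
    · congr 1
      apply Fin.ext
      simp [Nat.mod_eq_of_lt h]
    · congr 1
      apply Fin.ext
      have : (l : ℕ) = n := by omega
      simp [this]
  have ψX : ∀ l : Fin n, ψ (X l) = X l.castSucc := fun l => aeval_X _ _
  have hφI : ∀ f ∈ I, Ideal.Quotient.mkₐ K J (φ f) = 0 := by
    have : I ≤ RingHom.ker ((Ideal.Quotient.mkₐ K J).comp φ) := by
      rw [hI]
      refine sup_le ?_ ?_
      · rw [Pideal, Ideal.span_le]
        rintro _ ⟨i, j, h2, hij, hj, rfl⟩
        rw [SetLike.mem_coe, RingHom.mem_ker, AlgHom.comp_apply, Ideal.Quotient.mkₐ_eq_mk,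
          Ideal.Quotient.eq_zero_iff_mem]
        rw [map_sub, map_mul, map_mul, φX, φX, φX, φX]
        apply quad_mem
        have := eVec_mem n hn (i - 2) (j - i)
        simp only [xIdx]
        rw [Nat.mod_eq_of_lt (show i - 1 < n + 1 by omega),
          Nat.mod_eq_of_lt (show j - 1 < n + 1 by omega),
          Nat.mod_eq_of_lt (show i - 1 - 1 < n + 1 by omega),
          Nat.mod_eq_of_lt (show j + 1 - 1 < n + 1 by omega)]
        rw [show i - 2 + 1 = i - 1 by omega, show i - 2 + (j - i) + 1 = j - 1 by omega,
          show i - 2 + (j - i) + 2 = j + 1 - 1 by omega, show i - 2 = i - 1 - 1 by omega] at this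
        exact this
      · rw [Ideal.span_le]
        rintro _ rfl
        rw [SetLike.mem_coe, RingHom.mem_ker, AlgHom.comp_apply, map_sub, φX, φX]
        have : Fin.ofNat n ((Fin.last n : Fin (n + 1)) : ℕ)
            = Fin.ofNat n ((0 : Fin (n + 1)) : ℕ) := by
          apply Fin.ext; simp
        rw [this, sub_self, map_zero]
    exact fun f hf => this hf
  let z : ℕ → (MvPolynomial (Fin (n + 1)) K ⧸ I) := fun m => Ideal.Quotient.mkₐ K I (X (xIdx n (m + 1)))
  have hz0 : z n = z 0 := by
    simp only [z, Ideal.Quotient.mkₐ_eq_mk]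
    rw [Ideal.Quotient.eq]
    apply Ideal.mem_sup_right
    apply Ideal.subset_span
    rw [Set.mem_singleton_iff]
    congr 2
    apply Fin.ext
    simp [xIdx]
  have hz : ∀ i j, i ≤ j → j + 2 ≤ n → z (i + 1) * z (j + 1) = z i * z (j + 2) := by
    intro i j hij hj
    simp only [z, ← map_mul, Ideal.Quotient.mkₐ_eq_mk]
    rw [Ideal.Quotient.eq]
    apply Ideal.mem_sup_left
    apply Ideal.subset_span
    exact ⟨i + 2, j + 2, by omega, by omega, by omega, rfl⟩
  have zψ : ∀ l : Fin n, Ideal.Quotient.mkₐ K I (ψ (X l)) = z l := by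
    intro l
    rw [ψX]
    simp only [z]
    congr 2
    apply Fin.ext
    simp only [xIdx, Fin.val_castSucc, Nat.add_sub_cancel]
    rw [Nat.mod_eq_of_lt (by omega)]
  have hψJ : ∀ f ∈ J, Ideal.Quotient.mkₐ K I (ψ f) = 0 := by
    have : J ≤ RingHom.ker ((Ideal.Quotient.mkₐ K I).comp ψ) := by
      rw [hJ, latticeIdeal, Ideal.span_le]
      rintro _ ⟨u, v, huv, rfl⟩
      rw [SetLike.mem_coe, RingHom.mem_ker, AlgHom.comp_apply]
      simp only [map_sub, map_prod, map_pow, zψ]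
      rw [sub_eq_zero]
      refine aux_prod (fun l : Fin n => z l) ?_ u v ?_ ?_
      · intro a b
        have := hankel_cyc n z hz hz0 a b a.2 b.2
        simpa [Fin.val_add] using this
      · have := lap_functional n hn (fun _ => (1 : ℤ)) (by intro j; norm_num) _ huv
        simp only [Pi.sub_apply, smul_eq_mul, mul_one, Finset.sum_sub_distrib] at this
        rw [sub_eq_zero] at this
        exact_mod_cast this
      · have := lap_functional n hn (fun i : Fin n => i)
          (by intro j; rw [two_smul]; abel) _ huv
        simp only [Pi.sub_apply, sub_smul, Finset.sum_sub_distrib, natCast_zsmul] at this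
        rwa [sub_eq_zero] at this
    exact fun f hf => this hf
  let F := Ideal.Quotient.liftₐ I ((Ideal.Quotient.mkₐ K J).comp φ) hφI
  let G := Ideal.Quotient.liftₐ J ((Ideal.Quotient.mkₐ K I).comp ψ) hψJ
  have hF : ∀ f, F (Ideal.Quotient.mkₐ K I f) = Ideal.Quotient.mkₐ K J (φ f) := fun f => rfl
  have hG : ∀ f, G (Ideal.Quotient.mkₐ K J f) = Ideal.Quotient.mkₐ K I (ψ f) := fun f => rfl
  refine ⟨AlgEquiv.ofAlgHom F G ?_ ?_, fun f => rfl⟩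
  · apply Ideal.Quotient.algHom_ext
    apply MvPolynomial.algHom_ext
    intro l
    change F (G (Ideal.Quotient.mkₐ K J (X l))) = Ideal.Quotient.mkₐ K J (X l)
    rw [hG, hF, ψX, φX]
    congr 2
    apply Fin.ext
    simp
  · apply Ideal.Quotient.algHom_ext
    apply MvPolynomial.algHom_ext
    intro l
    change G (F (Ideal.Quotient.mkₐ K I (X l))) = Ideal.Quotient.mkₐ K I (X l)
    rw [hF, hG, φX, zψ]
    have hl : Ideal.Quotient.mkₐ K I (X l) = z l := by
      simp only [z]
      congr 2
      apply Fin.ext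
      simp only [xIdx, Nat.add_sub_cancel]
      rw [Nat.mod_eq_of_lt l.2]
    rw [hl]
    rcases Nat.lt_or_ge (l : ℕ) n with h | h
    · simp [Nat.mod_eq_of_lt h]
    · have : (l : ℕ) = n := by omega
      simp [this, hz0]
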